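/- For the Robinson–Trautman metric, the nonzero components of the Ricci tensor (in coordinates indexed 1=t, 2=r, 3=x, 4=y) are S_{11} = -8b(d + r(-a + 2br))/r², S_{12} = S_{21} = -4b/r, and S_{33} = S_{44} = (-2a + 8br + f_x² + f_y² - f(f_{xx} + f_{yy}))/f². -/

import Mathlib

open scoped BigOperators

noncomputable section

/-- Points of the coordinate chart `(t,r,x,y)`. -/
abbrev RTPt := Fin 4 → ℝ

/-- Partial derivative in coordinate direction `i`. -/
def RTpd (i : Fin 4) (F : RTPt → ℝ) (p : RTPt) : ℝ :=
  deriv (fun s => F (Function.update p i s)) (p i)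

/-- partial derivative of `f(x,y)` in `x`. -/
def pX (f : ℝ → ℝ → ℝ) (x y : ℝ) : ℝ := deriv (fun s => f s y) x

/-- partial derivative of `f(x,y)` in `y`. -/
def pY (f : ℝ → ℝ → ℝ) (x y : ℝ) : ℝ := deriv (fun s => f x s) y

/-- The Robinson–Trautman metric components. -/
def RTg (a b d : ℝ) (f : ℝ → ℝ → ℝ) (i j : Fin 4) (p : RTPt) : ℝ :=
  if i = 0 ∧ j = 0 then -2 * (a - 2 * b * p 1 - d / p 1)
  else if (i = 0 ∧ j = 1) ∨ (i = 1 ∧ j = 0) then 1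
  else if (i = 2 ∧ j = 2) ∨ (i = 3 ∧ j = 3) then -(p 1)^2 / (f (p 2) (p 3))^2
  else 0

/-- The inverse Robinson–Trautman metric components. -/
def RTgInv (a b d : ℝ) (f : ℝ → ℝ → ℝ) (i j : Fin 4) (p : RTPt) : ℝ :=
  if i = 1 ∧ j = 1 then 2 * (a - 2 * b * p 1 - d / p 1)
  else if (i = 0 ∧ j = 1) ∨ (i = 1 ∧ j = 0) then 1
  else if (i = 2 ∧ j = 2) ∨ (i = 3 ∧ j = 3) then -(f (p 2) (p 3))^2 / (p 1)^2
  else 0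

/-- Christoffel symbols `Γ^k_{ij}` of the Levi-Civita connection of the RT metric. -/
def RTGamma (a b d : ℝ) (f : ℝ → ℝ → ℝ) (k i j : Fin 4) (p : RTPt) : ℝ :=
  (1/2) * ∑ l : Fin 4, RTgInv a b d f k l p *
    (RTpd i (RTg a b d f l j) p + RTpd j (RTg a b d f l i) p - RTpd l (RTg a b d f i j) p)

/-- `(0,4)` Riemann curvature tensor
`R_{pqrs} = g_{pα}(∂_s Γ^α_{qr} - ∂_r Γ^α_{qs} + Γ^β_{qr}Γ^α_{βs} - Γ^β_{qs}Γ^α_{βr})`. -/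
def RTRiem (a b d : ℝ) (f : ℝ → ℝ → ℝ) (i j k l : Fin 4) (p : RTPt) : ℝ :=
  ∑ α : Fin 4, RTg a b d f i α p *
    (RTpd l (RTGamma a b d f α j k) p - RTpd k (RTGamma a b d f α j l) p
      + ∑ β : Fin 4, (RTGamma a b d f β j k p * RTGamma a b d f α β l p
          - RTGamma a b d f β j l p * RTGamma a b d f α β k p))

/-- Ricci tensor `S_{ij} = R^k_{ikj}` of the RT metric. -/
def RTRic (a b d : ℝ) (f : ℝ → ℝ → ℝ) (i j : Fin 4) (p : RTPt) : ℝ :=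
  ∑ k : Fin 4, ∑ l : Fin 4, RTgInv a b d f k l p * RTRiem a b d f l i k j p

/-- Scalar curvature of the RT metric. -/
def RTScal (a b d : ℝ) (f : ℝ → ℝ → ℝ) (p : RTPt) : ℝ :=
  ∑ i : Fin 4, ∑ j : Fin 4, RTgInv a b d f i j p * RTRic a b d f i j p

/-- Lie derivative of a `(0,2)` tensor field along a vector field `X`. -/
def RTlie2 (X : RTPt → Fin 4 → ℝ) (T : Fin 4 → Fin 4 → RTPt → ℝ) (i j : Fin 4) (p : RTPt) : ℝ :=
  (∑ k : Fin 4, X p k * RTpd k (T i j) p)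
  + (∑ k : Fin 4, T k j p * RTpd i (fun q => X q k) p)
  + (∑ k : Fin 4, T i k p * RTpd j (fun q => X q k) p)

/-- Lie derivative of a `(0,4)` tensor field along a vector field `X`. -/
def RTlie4 (X : RTPt → Fin 4 → ℝ) (T : Fin 4 → Fin 4 → Fin 4 → Fin 4 → RTPt → ℝ)
    (i j k l : Fin 4) (p : RTPt) : ℝ :=
  (∑ m : Fin 4, X p m * RTpd m (T i j k l) p)
  + (∑ m : Fin 4, T m j k l p * RTpd i (fun q => X q m) p)
  + (∑ m : Fin 4, T i m k l p * RTpd j (fun q => X q m) p)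
  + (∑ m : Fin 4, T i j m l p * RTpd k (fun q => X q m) p)
  + (∑ m : Fin 4, T i j k m p * RTpd l (fun q => X q m) p)

/-- Kulkarni–Nomizu product of two `(0,2)` tensor fields. -/
def RTKN (A B : Fin 4 → Fin 4 → RTPt → ℝ) (i j k l : Fin 4) (p : RTPt) : ℝ :=
  A i l p * B j k p - A i k p * B j l p + A j k p * B i l p - A j l p * B i k p

/-- `F₁ = f_x² + f_y² - f(f_{xx} + f_{yy})`. -/
def F1 (f : ℝ → ℝ → ℝ) (x y : ℝ) : ℝ :=
  (pX f x y)^2 + (pY f x y)^2 - f x y * (pX (pX f) x y + pY (pY f) x y)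

/-- `F₁ᵐ = f_x² + f_y² - f(f_{xx} - f_{yy})`. -/
def F1m (f : ℝ → ℝ → ℝ) (x y : ℝ) : ℝ :=
  (pX f x y)^2 + (pY f x y)^2 - f x y * (pX (pX f) x y - pY (pY f) x y)

/-- `F₁₁` from the paper. -/
def F11 (a b : ℝ) (f : ℝ → ℝ → ℝ) (r x y : ℝ) : ℝ :=
  -2*(pX f x y)^3
  + pX f x y * (4*a - 16*b*r - 2*(pY f x y)^2 + f x y * (pY (pY f) x y + 3*pX (pX f) x y))
  - f x y * (-2*pY f x y * pY (pX f) x y + f x y * (pX (pX (pX f)) x y + pY (pY (pX f)) x y))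

/-- `F₁₃` from the paper. -/
def F13 (a b : ℝ) (f : ℝ → ℝ → ℝ) (r x y : ℝ) : ℝ :=
  -2*(pY f x y)^3
  + pY f x y * (4*a - 16*b*r - 2*(pX f x y)^2 + f x y * (3*pY (pY f) x y + pX (pX f) x y))
  - f x y * (-2*pX f x y * pY (pX f) x y + f x y * (pY (pY (pY f)) x y + pY (pX (pX f)) x y))

/-! In the region `r ≠ 0` the metric is `-2h dt² + 2 dt dr - r² e^{-2L} (dx² + dy²)` with
`h = a - 2br - d/r` and `L = log |f|`. The traces `Γ^k_{ik}` form the gradient of `2 log |r| - 2L`,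
and the terms of the Ricci tensor that are quadratic in the first derivatives of `L` cancel. What is
left of `L` is its Laplacian, and `-f² ΔL = f_x² + f_y² - f (f_{xx} + f_{yy})`. -/

section PartialDerivatives

@[simp]
lemma pX_one (x y : ℝ) : pX 1 x y = 0 :=
  deriv_const _ _

@[simp]
lemma pY_one (x y : ℝ) : pY 1 x y = 0 :=
  deriv_const _ _

variable {f : ℝ → ℝ → ℝ} {x y : ℝ}

lemma pX_eq_fderiv (hf : DifferentiableAt ℝ (Function.uncurry f) (x, y)) :
    pX f x y = fderiv ℝ (Function.uncurry f) (x, y) (1, 0) := by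
  have hline : HasDerivAt (fun s : ℝ => (s, y)) ((1 : ℝ), (0 : ℝ)) x :=
    (hasDerivAt_id x).prodMk (hasDerivAt_const x y)
  exact (hf.hasFDerivAt.comp_hasDerivAt x hline).deriv

lemma pY_eq_fderiv (hf : DifferentiableAt ℝ (Function.uncurry f) (x, y)) :
    pY f x y = fderiv ℝ (Function.uncurry f) (x, y) (0, 1) := by
  have hline : HasDerivAt (fun s : ℝ => (x, s)) ((0 : ℝ), (1 : ℝ)) y :=
    (hasDerivAt_const y x).prodMk (hasDerivAt_id y)
  exact (hf.hasFDerivAt.comp_hasDerivAt y hline).deriv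

lemma uncurry_pX (hf : Differentiable ℝ (Function.uncurry f)) :
    Function.uncurry (pX f) = fun z => fderiv ℝ (Function.uncurry f) z (1, 0) :=
  funext fun _ => pX_eq_fderiv (hf _)

lemma uncurry_pY (hf : Differentiable ℝ (Function.uncurry f)) :
    Function.uncurry (pY f) = fun z => fderiv ℝ (Function.uncurry f) z (0, 1) :=
  funext fun _ => pY_eq_fderiv (hf _)

lemma differentiable_fderiv_of_contDiff_two (hf : ContDiff ℝ 2 (Function.uncurry f)) :
    Differentiable ℝ (fderiv ℝ (Function.uncurry f)) :=
  (hf.fderiv_right (m := 1) (by norm_num)).differentiable one_ne_zero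

lemma differentiable_uncurry_pX (hf : ContDiff ℝ 2 (Function.uncurry f)) :
    Differentiable ℝ (Function.uncurry (pX f)) := by
  rw [uncurry_pX (hf.differentiable two_ne_zero)]
  exact (differentiable_fderiv_of_contDiff_two hf).clm_apply (differentiable_const _)

lemma differentiable_uncurry_pY (hf : ContDiff ℝ 2 (Function.uncurry f)) :
    Differentiable ℝ (Function.uncurry (pY f)) := by
  rw [uncurry_pY (hf.differentiable two_ne_zero)]
  exact (differentiable_fderiv_of_contDiff_two hf).clm_apply (differentiable_const _)

lemma pX_pY_comm (hf : ContDiff ℝ 2 (Function.uncurry f)) (x y : ℝ) :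
    pX (pY f) x y = pY (pX f) x y := by
  have hdf := hf.differentiable two_ne_zero
  have hddf := differentiable_fderiv_of_contDiff_two hf (x, y)
  have hsymm : IsSymmSndFDerivAt ℝ (Function.uncurry f) (x, y) :=
    hf.contDiffAt.isSymmSndFDerivAt (by simp)
  rw [pX_eq_fderiv (differentiable_uncurry_pY hf _), pY_eq_fderiv (differentiable_uncurry_pX hf _),
    uncurry_pX hdf, uncurry_pY hdf, fderiv_clm_apply hddf (differentiableAt_const _),
    fderiv_clm_apply hddf (differentiableAt_const _)]
  simpa using hsymm.eq (1, 0) (0, 1)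

lemma hasDerivAt_pX (hf : DifferentiableAt ℝ (Function.uncurry f) (x, y)) :
    HasDerivAt (fun s => f s y) (pX f x y) x := by
  have hline : DifferentiableAt ℝ (fun s : ℝ => (s, y)) x := by fun_prop
  exact (hf.comp x hline).hasDerivAt

lemma hasDerivAt_pY (hf : DifferentiableAt ℝ (Function.uncurry f) (x, y)) :
    HasDerivAt (fun s => f x s) (pY f x y) y := by
  have hline : DifferentiableAt ℝ (fun s : ℝ => (x, s)) y := by fun_prop
  exact (hf.comp y hline).hasDerivAt

end PartialDerivatives

section Logarithm

/-- The potential `L = log |f|`, in terms of which the conformal factor `1 / f²` of the transverse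
metric is `e^{-2L}`. `Real.log` already ignores the sign of `f`. -/
def logPotential (f : ℝ → ℝ → ℝ) (x y : ℝ) : ℝ := Real.log (f x y)

variable {f : ℝ → ℝ → ℝ} {x y : ℝ}

lemma contDiff_logPotential {n : WithTop ℕ∞} (hf : ContDiff ℝ n (Function.uncurry f))
    (hf0 : ∀ x y, f x y ≠ 0) : ContDiff ℝ n (Function.uncurry (logPotential f)) :=
  hf.log fun z => hf0 z.1 z.2

lemma pX_logPotential (hf : DifferentiableAt ℝ (Function.uncurry f) (x, y)) (h0 : f x y ≠ 0) :
    pX (logPotential f) x y = pX f x y / f x y :=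
  ((hasDerivAt_pX hf).log h0).deriv

lemma pY_logPotential (hf : DifferentiableAt ℝ (Function.uncurry f) (x, y)) (h0 : f x y ≠ 0) :
    pY (logPotential f) x y = pY f x y / f x y :=
  ((hasDerivAt_pY hf).log h0).deriv

lemma F1_div_sq (hf : ContDiff ℝ 2 (Function.uncurry f)) (hf0 : ∀ x y, f x y ≠ 0) (x y : ℝ) :
    F1 f x y / f x y ^ 2 = -(pX (pX (logPotential f)) x y + pY (pY (logPotential f)) x y) := by
  have hdf := hf.differentiable two_ne_zero
  have hxx : pX (fun x y => pX f x y / f x y) x y = _ :=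
    ((hasDerivAt_pX (differentiable_uncurry_pX hf (x, y))).fun_div
      (hasDerivAt_pX (hdf (x, y))) (hf0 x y)).deriv
  have hyy : pY (fun x y => pY f x y / f x y) x y = _ :=
    ((hasDerivAt_pY (differentiable_uncurry_pY hf (x, y))).fun_div
      (hasDerivAt_pY (hdf (x, y))) (hf0 x y)).deriv
  have hu : pX (logPotential f) = fun x y => pX f x y / f x y :=
    funext₂ fun x y => pX_logPotential (hdf (x, y)) (hf0 x y)
  have hv : pY (logPotential f) = fun x y => pY f x y / f x y :=
    funext₂ fun x y => pY_logPotential (hdf (x, y)) (hf0 x y)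
  rw [hu, hv, hxx, hyy, F1]
  ring

lemma pX_inv_sq (hf : DifferentiableAt ℝ (Function.uncurry f) (x, y)) (h0 : f x y ≠ 0) :
    pX (fun x y => (f x y ^ 2)⁻¹) x y = -2 * pX (logPotential f) x y * (f x y ^ 2)⁻¹ := by
  have hinv := ((hasDerivAt_pX hf).fun_pow 2).fun_inv (pow_ne_zero 2 h0)
  rw [pX, hinv.deriv, pX_logPotential hf h0]
  simp only [Nat.cast_ofNat, Nat.add_one_sub_one, pow_one]
  field_simp

lemma pY_inv_sq (hf : DifferentiableAt ℝ (Function.uncurry f) (x, y)) (h0 : f x y ≠ 0) :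
    pY (fun x y => (f x y ^ 2)⁻¹) x y = -2 * pY (logPotential f) x y * (f x y ^ 2)⁻¹ := by
  have hinv := ((hasDerivAt_pY hf).fun_pow 2).fun_inv (pow_ne_zero 2 h0)
  rw [pY, hinv.deriv, pY_logPotential hf h0]
  simp only [Nat.cast_ofNat, Nat.add_one_sub_one, pow_one]
  field_simp

end Logarithm

section CoordinateDerivatives

lemma RTpd_congr_of_eventuallyEq {F G : RTPt → ℝ} {p : RTPt} (h : F =ᶠ[nhds p] G) (i : Fin 4) :
    RTpd i F p = RTpd i G p := by
  have hline : Filter.Tendsto (Function.update p i) (nhds (p i)) (nhds p) := by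
    have hcont : Continuous (Function.update p i) := continuous_const.update i continuous_id
    simpa only [Function.update_eq_self] using hcont.tendsto (p i)
  exact (h.comp_tendsto hline).deriv_eq

@[simp]
lemma RTpd_zero (i : Fin 4) (p : RTPt) : RTpd i 0 p = 0 :=
  deriv_const _ _

@[simp]
lemma RTpd_one (i : Fin 4) (p : RTPt) : RTpd i 1 p = 0 :=
  deriv_const _ _

@[simp]
lemma RTpd_neg (i : Fin 4) (F : RTPt → ℝ) (p : RTPt) : RTpd i (-F) p = -RTpd i F p :=
  deriv.fun_neg

/-- The function `φ(r) ψ(x,y)`. Every component of the metric and of its Levi-Civita connection has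
this form up to sign. -/
def separated (φ : ℝ → ℝ) (ψ : ℝ → ℝ → ℝ) (p : RTPt) : ℝ := φ (p 1) * ψ (p 2) (p 3)

variable (φ : ℝ → ℝ) (ψ : ℝ → ℝ → ℝ) (p : RTPt)

@[simp]
lemma RTpd_zero_separated : RTpd 0 (separated φ ψ) p = 0 := by
  simp [RTpd, separated]

@[simp]
lemma RTpd_one_separated : RTpd 1 (separated φ ψ) p = deriv φ (p 1) * ψ (p 2) (p 3) := by
  simp [RTpd, separated]

@[simp]
lemma RTpd_two_separated : RTpd 2 (separated φ ψ) p = φ (p 1) * pX ψ (p 2) (p 3) := by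
  simp [RTpd, separated, pX]

@[simp]
lemma RTpd_three_separated : RTpd 3 (separated φ ψ) p = φ (p 1) * pY ψ (p 2) (p 3) := by
  simp [RTpd, separated, pY]

end CoordinateDerivatives

section Curvature

/-- The Christoffel symbols `Γ^k_{ij}` of a metric `g` with inverse `gInv` on the chart. -/
def christoffel (g gInv : Fin 4 → Fin 4 → RTPt → ℝ) (k i j : Fin 4) (p : RTPt) : ℝ :=
  (1 / 2) * ∑ l : Fin 4, gInv k l p *
    (RTpd i (g l j) p + RTpd j (g l i) p - RTpd l (g i j) p)

/-- The curvature `R^α_{jkl}` of the connection with coefficients `Γ`, with the sign convention of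
`RTRiem`. -/
def connectionCurvature (Γ : Fin 4 → Fin 4 → Fin 4 → RTPt → ℝ) (α j k l : Fin 4) (p : RTPt) : ℝ :=
  RTpd l (Γ α j k) p - RTpd k (Γ α j l) p
    + ∑ β : Fin 4, (Γ β j k p * Γ α β l p - Γ β j l p * Γ α β k p)

/-- The Ricci tensor of a metric `g` with inverse `gInv`, as the contraction by `gInv` of the fully
covariant Riemann tensor of `g`. -/
def ricci (g gInv : Fin 4 → Fin 4 → RTPt → ℝ) (i j : Fin 4) (p : RTPt) : ℝ :=
  ∑ k : Fin 4, ∑ l : Fin 4, gInv k l p *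
    ∑ α : Fin 4, g l α p * connectionCurvature (christoffel g gInv) α i k j p

lemma RTRic_eq_ricci (a b d : ℝ) (f : ℝ → ℝ → ℝ) :
    RTRic a b d f = ricci (RTg a b d f) (RTgInv a b d f) :=
  rfl

lemma connectionCurvature_congr {Γ Γ' : Fin 4 → Fin 4 → Fin 4 → RTPt → ℝ} {p : RTPt}
    (h : ∀ k i j, Γ k i j =ᶠ[nhds p] Γ' k i j) (α j k l : Fin 4) :
    connectionCurvature Γ α j k l p = connectionCurvature Γ' α j k l p := by
  simp only [connectionCurvature, fun k i j => (h k i j).eq_of_nhds,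
    fun k i j => RTpd_congr_of_eventuallyEq (h k i j)]

lemma ricci_eq_sum_connectionCurvature {g gInv : Fin 4 → Fin 4 → RTPt → ℝ} {p : RTPt}
    (hinv : ∀ k α, ∑ l : Fin 4, gInv k l p * g l α p = if k = α then 1 else 0) (i j : Fin 4) :
    ricci g gInv i j p = ∑ k : Fin 4, connectionCurvature (christoffel g gInv) k i k j p := by
  have raise_lower (T : Fin 4 → ℝ) (k : Fin 4) :
      ∑ l : Fin 4, gInv k l p * ∑ α : Fin 4, g l α p * T α = T k := by
    simp_rw [Finset.mul_sum, ← mul_assoc]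
    rw [Finset.sum_comm]
    simp_rw [← Finset.sum_mul, hinv]
    simp
  exact Finset.sum_congr rfl fun k _ => raise_lower _ k

end Curvature

section ProfileMetric

/-- The metric `-2 h(r) dt² + 2 dt dr - r² f(x,y)⁻² (dx² + dy²)`. The Robinson–Trautman metric has
the profile `h(r) = a - 2br - d/r`. -/
def profileMetric (h : ℝ → ℝ) (f : ℝ → ℝ → ℝ) : Fin 4 → Fin 4 → RTPt → ℝ :=
  let gtt := separated (fun r => -2 * h r) 1
  let gxx := separated (fun r => -r ^ 2) fun x y => (f x y ^ 2)⁻¹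
  !![gtt, 1, 0, 0; 1, 0, 0, 0; 0, 0, gxx, 0; 0, 0, 0, gxx]

/-- The inverse of `profileMetric h f`. -/
def profileMetricInv (h : ℝ → ℝ) (f : ℝ → ℝ → ℝ) : Fin 4 → Fin 4 → RTPt → ℝ :=
  let grr := separated (fun r => 2 * h r) 1
  let gxx := separated (fun r => -(r ^ 2)⁻¹) fun x y => f x y ^ 2
  !![0, 1, 0, 0; 1, grr, 0, 0; 0, 0, gxx, 0; 0, 0, 0, gxx]

/-- The Christoffel symbols of `profileMetric h f`, as the list over `k` of the matrices
`(Γ^k_{ij})_{ij}`. -/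
def profileChristoffel (h : ℝ → ℝ) (f : ℝ → ℝ → ℝ) : Fin 4 → Fin 4 → Fin 4 → RTPt → ℝ :=
  let h' := separated (deriv h) 1
  let hh' := separated (fun r => 2 * h r * deriv h r) 1
  let ρ := separated (fun r => r) fun x y => (f x y ^ 2)⁻¹
  let hρ := separated (fun r => 2 * h r * r) fun x y => (f x y ^ 2)⁻¹
  let s := separated (fun r => r⁻¹) 1
  let u := separated 1 (pX (logPotential f))
  let v := separated 1 (pY (logPotential f))
  ![!![h', 0, 0, 0; 0, 0, 0, 0; 0, 0, ρ, 0; 0, 0, 0, ρ],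
    !![hh', -h', 0, 0; -h', 0, 0, 0; 0, 0, hρ, 0; 0, 0, 0, hρ],
    !![0, 0, 0, 0; 0, 0, s, 0; 0, s, -u, -v; 0, 0, -v, u],
    !![0, 0, 0, 0; 0, 0, 0, s; 0, 0, v, -u; 0, s, -u, -v]]

variable {h : ℝ → ℝ} {f : ℝ → ℝ → ℝ} {p : RTPt}

lemma sum_profileMetricInv_mul_profileMetric (h : ℝ → ℝ) (h0 : f (p 2) (p 3) ≠ 0)
    (hp : p 1 ≠ 0) (k α : Fin 4) :
    ∑ l : Fin 4, profileMetricInv h f k l p * profileMetric h f l α p =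
      if k = α then 1 else 0 := by
  have hxx : (p 1 ^ 2)⁻¹ * f (p 2) (p 3) ^ 2 * (p 1 ^ 2 * (f (p 2) (p 3) ^ 2)⁻¹) = 1 := by
    field_simp
  rw [Fin.sum_univ_four]
  fin_cases k <;> fin_cases α <;> simp [profileMetric, profileMetricInv, separated, hxx]

lemma RTpd_profileMetric (h : ℝ → ℝ)
    (hf : DifferentiableAt ℝ (Function.uncurry f) (p 2, p 3)) (h0 : f (p 2) (p 3) ≠ 0)
    (l i j : Fin 4) :
    let r := p 1
    let ω := (f (p 2) (p 3) ^ 2)⁻¹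
    let u := pX (logPotential f) (p 2) (p 3)
    let v := pY (logPotential f) (p 2) (p 3)
    RTpd l (profileMetric h f i j) p =
      (![0,
        Matrix.diagonal ![-2 * deriv h r, 0, -2 * r * ω, -2 * r * ω],
        Matrix.diagonal ![0, 0, 2 * r ^ 2 * u * ω, 2 * r ^ 2 * u * ω],
        Matrix.diagonal ![0, 0, 2 * r ^ 2 * v * ω, 2 * r ^ 2 * v * ω]] :
        Fin 4 → Matrix (Fin 4) (Fin 4) ℝ) l i j := by
  intro r ω u v
  fin_cases l <;> fin_cases i <;> fin_cases j <;>
    simp [profileMetric, pX_inv_sq hf h0, pY_inv_sq hf h0, r, ω, u, v] <;> ring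

lemma christoffel_profileMetric (h : ℝ → ℝ)
    (hf : DifferentiableAt ℝ (Function.uncurry f) (p 2, p 3)) (h0 : f (p 2) (p 3) ≠ 0)
    (hp : p 1 ≠ 0) (k i j : Fin 4) :
    christoffel (profileMetric h f) (profileMetricInv h f) k i j p =
      profileChristoffel h f k i j p := by
  simp only [christoffel, RTpd_profileMetric h hf h0, Fin.sum_univ_four]
  fin_cases k <;> fin_cases i <;> fin_cases j <;>
    simp [profileMetricInv, profileChristoffel, separated, Matrix.diagonal] <;>
    field_simp

lemma sum_RTpd_profileChristoffel_trace (h : ℝ → ℝ) (f : ℝ → ℝ → ℝ) (p : RTPt) (i j : Fin 4) :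
    let L := logPotential f
    ∑ k : Fin 4, RTpd j (profileChristoffel h f k i k) p =
      !![0, 0, 0, 0;
         0, -2 / p 1 ^ 2, 0, 0;
         0, 0, -2 * pX (pX L) (p 2) (p 3), -2 * pY (pX L) (p 2) (p 3);
         0, 0, -2 * pX (pY L) (p 2) (p 3), -2 * pY (pY L) (p 2) (p 3)] i j := by
  intro L
  rw [Fin.sum_univ_four]
  fin_cases i <;> fin_cases j <;> simp [profileChristoffel, L] <;> ring

lemma sum_RTpd_profileChristoffel (f : ℝ → ℝ → ℝ) (hh : DifferentiableAt ℝ h (p 1))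
    (hh' : DifferentiableAt ℝ (deriv h) (p 1)) (i j : Fin 4) :
    let L := logPotential f
    let tt := 2 * (deriv h (p 1) ^ 2 + h (p 1) * deriv (deriv h) (p 1))
    let tr := -deriv (deriv h) (p 1)
    let ρ := 2 * (h (p 1) + p 1 * deriv h (p 1)) / f (p 2) (p 3) ^ 2
    let δ := pX (pX L) (p 2) (p 3) - pY (pY L) (p 2) (p 3)
    let xy := -pX (pY L) (p 2) (p 3) - pY (pX L) (p 2) (p 3)
    ∑ k : Fin 4, RTpd k (profileChristoffel h f k i j) p =
      !![tt, tr, 0, 0; tr, 0, 0, 0; 0, 0, ρ - δ, xy; 0, 0, xy, ρ + δ] i j := by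
  intro L tt tr ρ δ xy
  have deriv_tt : deriv (fun r => 2 * h r * deriv h r) (p 1) = tt := by
    rw [((hh.hasDerivAt.const_mul 2).fun_mul hh'.hasDerivAt).deriv]
    ring
  have deriv_xx : deriv (fun r => 2 * h r * r) (p 1) = 2 * (h (p 1) + p 1 * deriv h (p 1)) := by
    rw [((hh.hasDerivAt.const_mul 2).fun_mul (hasDerivAt_id' _)).deriv]
    ring
  rw [Fin.sum_univ_four]
  fin_cases i <;> fin_cases j <;>
    simp [profileChristoffel, L, tt, tr, ρ, δ, xy, deriv_tt, deriv_xx] <;> ring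

lemma sum_profileChristoffel_commutator (h : ℝ → ℝ) (f : ℝ → ℝ → ℝ) (hp : p 1 ≠ 0)
    (i j : Fin 4) :
    let Γ := fun k i j => profileChristoffel h f k i j p
    let r := p 1
    let tt := 2 * deriv h r * (deriv h r - 2 * h r / r)
    let tr := 2 * deriv h r / r
    ∑ k : Fin 4, ∑ β : Fin 4, (Γ β i k * Γ k β j - Γ β i j * Γ k β k) =
      !![tt, tr, 0, 0; tr, 2 / r ^ 2, 0, 0; 0, 0, 0, 0; 0, 0, 0, 0] i j := by
  intro Γ r tt tr
  simp only [Fin.sum_univ_four]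
  fin_cases i <;> fin_cases j <;>
    simp [profileChristoffel, separated, Γ, r, tt, tr] <;> field_simp <;> ring

lemma ricci_profileMetric_eq_sum (h : ℝ → ℝ) (hf : Differentiable ℝ (Function.uncurry f))
    (hf0 : ∀ x y, f x y ≠ 0) (hp : p 1 ≠ 0) (i j : Fin 4) :
    ricci (profileMetric h f) (profileMetricInv h f) i j p =
      ∑ k : Fin 4, connectionCurvature (profileChristoffel h f) k i k j p := by
  have hnear : ∀ᶠ q : RTPt in nhds p, q 1 ≠ 0 := (continuous_apply 1).continuousAt.eventually_ne hp
  have hΓ (k i j : Fin 4) : christoffel (profileMetric h f) (profileMetricInv h f) k i j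
      =ᶠ[nhds p] profileChristoffel h f k i j :=
    hnear.mono fun _ hq => christoffel_profileMetric h (hf _) (hf0 _ _) hq k i j
  rw [ricci_eq_sum_connectionCurvature (sum_profileMetricInv_mul_profileMetric h (hf0 _ _) hp)]
  exact Finset.sum_congr rfl fun k _ => connectionCurvature_congr hΓ k i k j

theorem RT_Ricci_components_general (hf : ContDiff ℝ 2 (Function.uncurry f))
    (hf0 : ∀ x y, f x y ≠ 0) (hp : p 1 ≠ 0) (hh : DifferentiableAt ℝ h (p 1))
    (hh' : DifferentiableAt ℝ (deriv h) (p 1)) (i j : Fin 4) :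
    let r := p 1
    let tr := deriv (deriv h) r + 2 * deriv h r / r
    let xx := (F1 f (p 2) (p 3) - 2 * (h r + r * deriv h r)) / f (p 2) (p 3) ^ 2
    ricci (profileMetric h f) (profileMetricInv h f) i j p =
      !![-2 * h r * tr, tr, 0, 0; tr, 0, 0, 0; 0, 0, xx, 0; 0, 0, 0, xx] i j := by
  intro r tr xx
  have hdf := hf.differentiable two_ne_zero
  have hxx : xx = -(pX (pX (logPotential f)) (p 2) (p 3) + pY (pY (logPotential f)) (p 2) (p 3))
      - 2 * (h r + r * deriv h r) / f (p 2) (p 3) ^ 2 := by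
    rw [← F1_div_sq hf hf0, ← sub_div]
  rw [ricci_profileMetric_eq_sum h hdf hf0 hp]
  simp only [connectionCurvature]
  rw [Finset.sum_add_distrib, Finset.sum_sub_distrib, sum_RTpd_profileChristoffel_trace,
    sum_RTpd_profileChristoffel f hh hh', sum_profileChristoffel_commutator h f hp, hxx]
  fin_cases i <;> fin_cases j <;>
    simp [pX_pY_comm (contDiff_logPotential hf hf0), tr, r] <;> ring

end ProfileMetric

section RobinsonTrautman

/-- The function `h(r) = a - 2br - d/r` for which `profileMetric h f` is the Robinson–Trautman
metric. -/
def rtProfile (a b d r : ℝ) : ℝ := a - 2 * b * r - d / r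

variable (a b d : ℝ) (f : ℝ → ℝ → ℝ)

lemma RTg_eq_profileMetric : RTg a b d f = profileMetric (rtProfile a b d) f := by
  funext i j p
  fin_cases i <;> fin_cases j <;>
    simp [RTg, profileMetric, separated, rtProfile, div_eq_mul_inv]

lemma RTgInv_eq_profileMetricInv : RTgInv a b d f = profileMetricInv (rtProfile a b d) f := by
  funext i j p
  fin_cases i <;> fin_cases j <;>
    simp [RTgInv, profileMetricInv, separated, rtProfile, div_eq_inv_mul]

variable {r : ℝ}

lemma hasDerivAt_rtProfile (hr : r ≠ 0) :
    HasDerivAt (rtProfile a b d) (-2 * b + d / r ^ 2) r := by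
  have hlin : HasDerivAt (fun r : ℝ => a - 2 * b * r) (-(2 * b * 1)) r :=
    ((hasDerivAt_id r).const_mul (2 * b)).const_sub a
  refine (hlin.fun_sub ((hasDerivAt_inv hr).const_mul d)).congr_deriv ?_
  ring

lemma hasDerivAt_deriv_rtProfile (hr : r ≠ 0) :
    HasDerivAt (deriv (rtProfile a b d)) (-2 * d / r ^ 3) r := by
  have hderiv : deriv (rtProfile a b d) =ᶠ[nhds r] fun r => -2 * b + d * (r ^ 2)⁻¹ :=
    (eventually_ne_nhds hr).mono fun _ hs => (hasDerivAt_rtProfile a b d hs).deriv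
  have hsq := (((hasDerivAt_pow 2 r).fun_inv (pow_ne_zero 2 hr)).const_mul d).const_add (-2 * b)
  refine (hsq.congr_of_eventuallyEq hderiv).congr_deriv ?_
  simp only [Nat.cast_ofNat, Nat.add_one_sub_one, pow_one]
  field_simp

lemma deriv_deriv_rtProfile_add (hr : r ≠ 0) :
    deriv (deriv (rtProfile a b d)) r + 2 * deriv (rtProfile a b d) r / r = -4 * b / r := by
  rw [(hasDerivAt_deriv_rtProfile a b d hr).deriv, (hasDerivAt_rtProfile a b d hr).deriv]
  field_simp
  ring

lemma rtProfile_add_mul_deriv (hr : r ≠ 0) :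
    rtProfile a b d r + r * deriv (rtProfile a b d) r = a - 4 * b * r := by
  rw [(hasDerivAt_rtProfile a b d hr).deriv, rtProfile]
  field_simp
  ring

lemma neg_two_mul_rtProfile_mul (hr : r ≠ 0) :
    -2 * rtProfile a b d r * (-4 * b / r) = -8 * b * (d + r * (-a + 2 * b * r)) / r ^ 2 := by
  rw [rtProfile]
  field_simp
  ring

end RobinsonTrautman


/-- the Ricci tensor components of the Robinson–Trautman metric. -/
theorem RT_Ricci_components (a b d : ℝ) (f : ℝ → ℝ → ℝ)
    (hf : ContDiff ℝ (⊤ : ℕ∞) (Function.uncurry f)) (hf0 : ∀ x y, f x y ≠ 0) :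
    ∀ p : RTPt, p 1 ≠ 0 → ∀ i j : Fin 4,
      RTRic a b d f i j p =
        if i = 0 ∧ j = 0 then -8*b*(d + p 1 * (-a + 2*b*p 1))/(p 1)^2
        else if (i = 0 ∧ j = 1) ∨ (i = 1 ∧ j = 0) then -4*b/(p 1)
        else if (i = 2 ∧ j = 2) ∨ (i = 3 ∧ j = 3) then
          (-2*a + 8*b*p 1 + (pX f (p 2) (p 3))^2 + (pY f (p 2) (p 3))^2
            - f (p 2) (p 3) * (pX (pX f) (p 2) (p 3) + pY (pY f) (p 2) (p 3)))
            / (f (p 2) (p 3))^2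
        else 0 := by
  intro p hp i j
  have hh := (hasDerivAt_rtProfile a b d hp).differentiableAt
  have hh' := (hasDerivAt_deriv_rtProfile a b d hp).differentiableAt
  rw [RTRic_eq_ricci, RTg_eq_profileMetric, RTgInv_eq_profileMetricInv,
    RT_Ricci_components_general (contDiff_infty.1 hf 2) hf0 hp hh hh',
    deriv_deriv_rtProfile_add a b d hp, rtProfile_add_mul_deriv a b d hp,
    neg_two_mul_rtProfile_mul a b d hp, F1]
  fin_cases i <;> fin_cases j <;> simp <;> ring
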